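/- Let M be a (2n+1)-dimensional Kenmotsu manifold with structure (φ, ξ, η, g), Levi-Civita connection ∇ and curvature tensor R. Then for all horizontal vector fields X, Y, Z, U, V on M: g((∇_V R)(X,Y)φZ, U) = −g((∇_V R)(X,Y)Z, φU). -/

import Mathlib

/-!
The curvature commutes with `φ` up to an algebraic term (`R_phi`):
`R(X,Y)φZ = φR(X,Y)Z + T(X,Y)Z`, where
`T(X,Y)Z = g(X,φZ)Y − g(Y,φZ)X + g(Y,Z)φX − g(X,Z)φY`.
This is the commutator identity `[[∇_X,∇_Y] − ∇_{[X,Y]}, φ]`, evaluated with the Kenmotsu formula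
for `∇φ`; the terms containing `η` are symmetric in `X, Y` and drop out.

Differentiating it along `V` gives
`(∇_V R)(X,Y)φZ = φ(∇_V R)(X,Y)Z + (∇_V φ)(R(X,Y)Z) − R(X,Y)((∇_V φ)Z) + (∇_V T)(X,Y)Z`.
For horizontal fields the last three terms are multiples of `ξ`: `∇φ` takes values in `F • ξ` on
horizontal fields, `R(X,Y)Z` is horizontal (`eta_R`), `R(X,Y)(f • ξ)` is a multiple of `ξ`
(`R_smul_xi`), and `T` is built from `g` and `φ` only. Pairing with the horizontal field `U` and
moving `φ` across `g` (`g_phi_left`) gives the claim.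

The axioms do not say that `[X,Y]` acts on functions as the commutator of `X` and `Y`, so `R` is
not known to be `F`-linear in its last argument, and `φ ξ = 0` is not available either. The lemmas
below are phrased so as to need neither.
-/

/-!
Abstract model of a (2n+1)-dimensional Kenmotsu manifold: `F` plays the role of the ring
of smooth functions on `M` and `VF` the `F`-module of (smooth) vector fields on `M`.
The field `n` records the dimension `2n+1`.  All defining axioms of an almost contact
metric structure, of the Levi-Civita connection, and the Kenmotsu conditions are included.
-/
structure Kenmotsu (F VF : Type*) [CommRing F] [AddCommGroup VF] [Module F VF] where
  /-- half-dimension: `M` has dimension `2n+1` -/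
  n : ℕ
  /-- action of a vector field on a function (directional derivative) -/
  act : VF → F → F
  /-- Lie bracket of vector fields -/
  bracket : VF → VF → VF
  /-- Levi-Civita connection `∇` -/
  nabla : VF → VF → VF
  /-- Riemannian metric -/
  g : VF → VF → F
  /-- structure `(1,1)`-tensor `φ` -/
  phi : VF → VF
  /-- Reeb vector field `ξ` -/
  xi : VF
  /-- structure 1-form `η` -/
  eta : VF → F
  -- tensoriality / derivation axioms
  act_add : ∀ X Y f, act (X + Y) f = act X f + act Y f
  act_smul : ∀ (c : F) X f, act (c • X) f = c * act X f
  act_mul : ∀ X f h, act X (f * h) = act X f * h + f * act X h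
  bracket_skew : ∀ X Y, bracket X Y = -bracket Y X
  g_addl : ∀ X Y Z, g (X + Y) Z = g X Z + g Y Z
  g_smull : ∀ (c : F) X Y, g (c • X) Y = c * g X Y
  g_symm : ∀ X Y, g X Y = g Y X
  phi_add : ∀ X Y, phi (X + Y) = phi X + phi Y
  phi_smul : ∀ (c : F) X, phi (c • X) = c • phi X
  eta_add : ∀ X Y, eta (X + Y) = eta X + eta Y
  eta_smul : ∀ (c : F) X, eta (c • X) = c * eta X
  nabla_addl : ∀ X Y Z, nabla (X + Y) Z = nabla X Z + nabla Y Z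
  nabla_smull : ∀ (c : F) X Y, nabla (c • X) Y = c • nabla X Y
  nabla_addr : ∀ X Y Z, nabla X (Y + Z) = nabla X Y + nabla X Z
  nabla_leibniz : ∀ X (f : F) Y, nabla X (f • Y) = act X f • Y + f • nabla X Y
  -- Levi-Civita connection axioms
  torsion_free : ∀ X Y, nabla X Y - nabla Y X = bracket X Y
  metric_compat : ∀ X Y Z, act X (g Y Z) = g (nabla X Y) Z + g Y (nabla X Z)
  -- almost contact metric structure axioms
  eta_def : ∀ X, eta X = g X xi
  phi_sq : ∀ X, phi (phi X) = -X + eta X • xi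
  eta_xi : eta xi = 1
  g_phi_phi : ∀ X Y, g (phi X) (phi Y) = g X Y - eta X * eta Y
  -- Kenmotsu conditions
  nabla_phi : ∀ X Y,
    nabla X (phi Y) - phi (nabla X Y) = -(g X (phi Y)) • xi - eta Y • phi X
  nabla_xi : ∀ X, nabla X xi = X - eta X • xi

namespace Kenmotsu

variable {F VF : Type*} [CommRing F] [AddCommGroup VF] [Module F VF]

/-- Riemann curvature tensor `R(X,Y)Z = ∇_X∇_Y Z − ∇_Y∇_X Z − ∇_{[X,Y]}Z`. -/
def R (K : Kenmotsu F VF) (X Y Z : VF) : VF :=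
  K.nabla X (K.nabla Y Z) - K.nabla Y (K.nabla X Z) - K.nabla (K.bracket X Y) Z

/-- Covariant derivative `(∇_W R)(X,Y)Z` of the curvature tensor. -/
def nablaR (K : Kenmotsu F VF) (W X Y Z : VF) : VF :=
  K.nabla W (K.R X Y Z) - K.R (K.nabla W X) Y Z - K.R X (K.nabla W Y) Z
    - K.R X Y (K.nabla W Z)

/-- The derivation action `(R(U,V)·R)(X,Y)Z`. -/
def RdotR (K : Kenmotsu F VF) (U V X Y Z : VF) : VF :=
  K.R U V (K.R X Y Z) - K.R (K.R U V X) Y Z - K.R X (K.R U V Y) Z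
    - K.R X Y (K.R U V Z)

/-- Lie derivative `(ℒ_ξ R)(X,Y)Z` of the `(1,3)`-curvature tensor along `ξ`. -/
def lieR (K : Kenmotsu F VF) (X Y Z : VF) : VF :=
  K.bracket K.xi (K.R X Y Z) - K.R (K.bracket K.xi X) Y Z
    - K.R X (K.bracket K.xi Y) Z - K.R X Y (K.bracket K.xi Z)

/-- The auxiliary `(1,3)`-tensor `H₁(X,Y)Z = R(X,Y)Z − g(X,Z)Y + g(Y,Z)X`. -/
def H1 (K : Kenmotsu F VF) (X Y Z : VF) : VF :=
  K.R X Y Z - K.g X Z • Y + K.g Y Z • X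

/-- `H(X,Y,Z,U) = g(H₁(X,Y)Z, U)`. -/
def H (K : Kenmotsu F VF) (X Y Z U : VF) : F := K.g (K.H1 X Y Z) U

/-- A vector field is horizontal if it is orthogonal to `ξ`, i.e. `η(X) = 0`. -/
def Horizontal (K : Kenmotsu F VF) (X : VF) : Prop := K.eta X = 0

/-- `M` is locally `φ`-semisymmetric if `φ²((R(U,V)·R)(X,Y)Z) = 0` for all horizontal
vector fields `X, Y, Z, U, V`. -/
def LocallyPhiSemisymmetric (K : Kenmotsu F VF) : Prop :=
  ∀ X Y Z U V : VF, K.Horizontal X → K.Horizontal Y → K.Horizontal Z →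
    K.Horizontal U → K.Horizontal V →
    K.phi (K.phi (K.RdotR U V X Y Z)) = 0

end Kenmotsu

namespace Kenmotsu

variable {F VF : Type*} [CommRing F] [AddCommGroup VF] [Module F VF] (K : Kenmotsu F VF)

lemma g_addr (X Y Z : VF) : K.g X (Y + Z) = K.g X Y + K.g X Z := by
  rw [K.g_symm, K.g_addl, K.g_symm Y, K.g_symm Z]

lemma g_smulr (c : F) (X Y : VF) : K.g X (c • Y) = c * K.g X Y := by
  rw [K.g_symm, K.g_smull, K.g_symm Y]

lemma g_negl (X Y : VF) : K.g (-X) Y = -K.g X Y := by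
  simpa using K.g_smull (-1) X Y

lemma g_negr (X Y : VF) : K.g X (-Y) = -K.g X Y := by
  simpa using K.g_smulr (-1) X Y

lemma g_subl (X Y Z : VF) : K.g (X - Y) Z = K.g X Z - K.g Y Z := by
  rw [sub_eq_add_neg, K.g_addl, K.g_negl, sub_eq_add_neg]

lemma g_subr (X Y Z : VF) : K.g X (Y - Z) = K.g X Y - K.g X Z := by
  rw [sub_eq_add_neg, K.g_addr, K.g_negr, sub_eq_add_neg]

lemma phi_neg (X : VF) : K.phi (-X) = -K.phi X := by
  simpa using K.phi_smul (-1) X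

lemma phi_sub (X Y : VF) : K.phi (X - Y) = K.phi X - K.phi Y := by
  rw [sub_eq_add_neg, K.phi_add, K.phi_neg, sub_eq_add_neg]

lemma eta_neg (X : VF) : K.eta (-X) = -K.eta X := by
  simpa using K.eta_smul (-1) X

lemma eta_sub (X Y : VF) : K.eta (X - Y) = K.eta X - K.eta Y := by
  rw [sub_eq_add_neg, K.eta_add, K.eta_neg, sub_eq_add_neg]

lemma nabla_zeror (X : VF) : K.nabla X 0 = 0 := by
  simpa using K.nabla_addr X 0 0

lemma nabla_negr (X Y : VF) : K.nabla X (-Y) = -K.nabla X Y := by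
  have h := K.nabla_addr X Y (-Y)
  rw [add_neg_cancel, nabla_zeror] at h
  exact (neg_eq_of_add_eq_zero_right h.symm).symm

lemma nabla_subr (X Y Z : VF) : K.nabla X (Y - Z) = K.nabla X Y - K.nabla X Z := by
  rw [sub_eq_add_neg, K.nabla_addr, K.nabla_negr, sub_eq_add_neg]

lemma nabla_negl (X Y : VF) : K.nabla (-X) Y = -K.nabla X Y := by
  simpa using K.nabla_smull (-1) X Y

lemma nabla_subl (X Y Z : VF) : K.nabla (X - Y) Z = K.nabla X Z - K.nabla Y Z := by
  rw [sub_eq_add_neg, K.nabla_addl, K.nabla_negl, sub_eq_add_neg]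

/-- Additivity in the function is not an axiom; it follows from the Leibniz rule for `f • ξ`. -/
lemma act_add_right (X : VF) (f h : F) : K.act X (f + h) = K.act X f + K.act X h := by
  have e := K.nabla_leibniz X (f + h) K.xi
  rw [add_smul, K.nabla_addr, K.nabla_leibniz, K.nabla_leibniz] at e
  have e' := congrArg K.eta e
  simp only [K.eta_add, K.eta_smul, K.eta_xi] at e'
  linear_combination -e'

lemma act_zero (X : VF) : K.act X 0 = 0 := by
  simpa using K.act_add_right X 0 0

lemma act_neg (X : VF) (f : F) : K.act X (-f) = -K.act X f := by
  have h := K.act_add_right X f (-f)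
  rw [add_neg_cancel, act_zero] at h
  exact (neg_eq_of_add_eq_zero_right h.symm).symm

lemma act_sub (X : VF) (f h : F) : K.act X (f - h) = K.act X f - K.act X h := by
  rw [sub_eq_add_neg, K.act_add_right, K.act_neg, sub_eq_add_neg]

lemma nabla_phi_eq (X Y : VF) :
    K.nabla X (K.phi Y) = K.phi (K.nabla X Y) - K.g X (K.phi Y) • K.xi - K.eta Y • K.phi X := by
  linear_combination (norm := module) K.nabla_phi X Y

/-- The covariant derivative of `η`, written as `(∇_X η)Y = g(X,Y) − η(X)η(Y)`. -/
lemma act_eta (X Y : VF) :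
    K.act X (K.eta Y) = K.eta (K.nabla X Y) + K.g X Y - K.eta X * K.eta Y := by
  rw [K.eta_def Y, K.metric_compat, K.nabla_xi, g_subr, g_smulr, ← K.eta_def, ← K.eta_def,
    K.g_symm Y X]
  ring

/-- Obtained by comparing `φ(φ²X)` with `φ²(φX)`. -/
lemma eta_phi_of_horizontal {X : VF} (hX : K.eta X = 0) : K.eta (K.phi X) = 0 := by
  have h := K.phi_sq (K.phi X)
  rw [K.phi_sq X, hX, zero_smul, add_zero, phi_neg] at h
  have h' : K.eta (K.phi X) • K.xi = 0 := by simpa using h.symm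
  simpa [K.eta_smul, K.eta_xi] using
    (congrArg K.eta h').trans (by simpa using K.eta_smul 0 0)

/-- Skew-adjointness of `φ`. Horizontality of one argument matters since `φ ξ = 0` is not known. -/
lemma g_phi_left (A : VF) {U : VF} (hU : K.eta U = 0) :
    K.g (K.phi A) U = -K.g A (K.phi U) := by
  have h := K.g_phi_phi A (K.phi U)
  rw [K.phi_sq U, hU, K.eta_phi_of_horizontal hU, zero_smul, add_zero, g_negr] at h
  linear_combination -h

lemma R_add (X Y Z W : VF) : K.R X Y (Z + W) = K.R X Y Z + K.R X Y W := by
  simp only [R, K.nabla_addr]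
  abel

lemma R_neg (X Y Z : VF) : K.R X Y (-Z) = -K.R X Y Z := by
  simp only [R, K.nabla_negr]
  abel

lemma R_sub (X Y Z W : VF) : K.R X Y (Z - W) = K.R X Y Z - K.R X Y W := by
  rw [sub_eq_add_neg, R_add, R_neg, sub_eq_add_neg]

lemma R_xi (X Y : VF) : K.R X Y K.xi = K.eta X • Y - K.eta Y • X := by
  simp only [R, K.nabla_xi, K.nabla_subr, K.nabla_leibniz, K.act_eta, ← K.torsion_free,
    eta_sub, K.g_symm Y X]
  module

/-- The coefficient is `f ↦ X(Yf) − Y(Xf) − [X,Y]f`, which the axioms do not force to vanish. -/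
lemma R_smul_xi {X Y : VF} (hX : K.eta X = 0) (hY : K.eta Y = 0) (f : F) :
    ∃ c : F, K.R X Y (f • K.xi) = c • K.xi := by
  have h := K.R_xi X Y
  rw [hX, hY, zero_smul, zero_smul, sub_zero] at h
  refine ⟨K.act X (K.act Y f) - K.act Y (K.act X f) - K.act (K.bracket X Y) f, ?_⟩
  simp only [R] at h
  simp only [R, K.nabla_leibniz, K.nabla_addr]
  linear_combination (norm := module) f • h

/-- `R(X,Y)Z` is horizontal for horizontal `X, Y, Z`: differentiate `η(Z) = 0` twice. -/
lemma eta_R {X Y Z : VF} (hX : K.eta X = 0) (hY : K.eta Y = 0) (hZ : K.eta Z = 0) :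
    K.eta (K.R X Y Z) = 0 := by
  have e (W A : VF) := K.act_eta W A
  have first (W : VF) : K.eta (K.nabla W Z) = -K.g W Z := by
    have := e W Z
    rw [hZ, act_zero] at this
    linear_combination -this
  have second (W A : VF) : K.eta (K.nabla W (K.nabla A Z)) =
      -K.g (K.nabla W A) Z - K.g A (K.nabla W Z) - K.g W (K.nabla A Z)
        - K.eta W * K.g A Z := by
    have := e W (K.nabla A Z)
    rw [first, act_neg, K.metric_compat] at this
    linear_combination -this
  simp only [R, eta_sub, second, first, ← K.torsion_free, g_subl, hX, hY]
  ring

/-- The defect of commutation of `R(X,Y)` with `φ`. -/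
def T (X Y Z : VF) : VF :=
  K.g X (K.phi Z) • Y - K.g Y (K.phi Z) • X + K.g Y Z • K.phi X - K.g X Z • K.phi Y

lemma R_phi (X Y Z : VF) : K.R X Y (K.phi Z) = K.phi (K.R X Y Z) + K.T X Y Z := by
  simp only [R, T, K.nabla_phi_eq, K.nabla_subr, K.nabla_leibniz, K.metric_compat,
    K.nabla_xi, phi_sub, g_subr, g_subl, g_smulr, ← K.torsion_free, K.eta_def]
  rw [K.g_symm Z X, K.g_symm Z Y]
  module

/-- On horizontal fields, `∇_V T` has no horizontal component: only `∇φ` contributes, along `ξ`. -/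
lemma g_nabla_T {X Y Z U : VF} (V : VF) (hX : K.eta X = 0) (hY : K.eta Y = 0) (hZ : K.eta Z = 0)
    (hU : K.eta U = 0) :
    K.g (K.nabla V (K.T X Y Z) - K.T (K.nabla V X) Y Z - K.T X (K.nabla V Y) Z
      - K.T X Y (K.nabla V Z)) U = 0 := by
  have hxi (A : VF) (hA : K.eta A = 0) : K.g A K.xi = 0 := by rw [← K.eta_def, hA]
  have hU' : K.g K.xi U = 0 := by rw [K.g_symm, hxi U hU]
  simp only [T, K.nabla_subr, K.nabla_addr, K.nabla_leibniz, K.metric_compat, K.nabla_phi_eq,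
    g_subl, g_subr, K.g_addl, K.g_smull, g_smulr, hX, hY, hZ, hxi X hX, hxi Y hY, hU']
  ring

end Kenmotsu

/-- In a Kenmotsu manifold, for horizontal vector fields `X, Y, Z, U, V`:
`g((∇_V R)(X,Y)φZ, U) = −g((∇_V R)(X,Y)Z, φU)`. -/
theorem kenmotsu_nablaR_phi_inner
    {F VF : Type*} [CommRing F] [AddCommGroup VF] [Module F VF]
    (K : Kenmotsu F VF) (X Y Z U V : VF)
    (hX : K.Horizontal X) (hY : K.Horizontal Y) (hZ : K.Horizontal Z)
    (hU : K.Horizontal U) (hV : K.Horizontal V) :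
    K.g (K.nablaR V X Y (K.phi Z)) U = -(K.g (K.nablaR V X Y Z) (K.phi U)) := by
  simp only [Kenmotsu.Horizontal] at hX hY hZ hU
  have hxiU : K.g K.xi U = 0 := by rw [K.g_symm, ← K.eta_def, hU]
  obtain ⟨c, hc⟩ := K.R_smul_xi hX hY (K.g V (K.phi Z))
  have hT := K.g_nabla_T V hX hY hZ hU
  have key : K.nablaR V X Y (K.phi Z) = K.phi (K.nablaR V X Y Z)
      + (K.nabla V (K.T X Y Z) - K.T (K.nabla V X) Y Z - K.T X (K.nabla V Y) Z
        - K.T X Y (K.nabla V Z))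
      + (c - K.g V (K.phi (K.R X Y Z))) • K.xi := by
    simp only [Kenmotsu.nablaR, K.nabla_phi_eq V Z, K.R_phi, K.R_sub, hc, hZ, zero_smul, sub_zero,
      K.nabla_addr, K.nabla_phi_eq V (K.R X Y Z), K.eta_R hX hY hZ, K.phi_sub]
    module
  rw [key, K.g_addl, K.g_addl, hT, K.g_smull, hxiU, K.g_phi_left _ hU]
  ring
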